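/- Let (G,C) be a strongly connected inhomogeneous Mauldin–Williams graph in ℝ^d satisfying the SOSC, with the sets X_i having pairwise disjoint interiors, such that ∫₀^∞ e^{−s₀(G)t} N_{e^{−t}}(C_i) dt < ∞ for all i ∈ V, and set K^C = ⋃_{i∈V} K_i^C. If G_M = τℤ for some τ > 0, then for every y ∈ [0, τ), lim_{n→∞} e^{−s₀(G)(nτ+y)} N_{e^{−(nτ+y)}}(K^C) exists and equals Σ_{i∈V} h_i(y), where h_i : ℝ → [δ,∞) are the τ-periodic functions with lim_{n→∞} N_{e^{−(nτ+y)}}(K_i^C)/(h_i(y)e^{s₀(G)(nτ+y)}) = 1. -/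

import Mathlib

open Set Filter Topology MeasureTheory Metric

noncomputable section

/-- Points of `ℝ^d`. -/
abbrev Pt (d : ℕ) := EuclideanSpace ℝ (Fin d)

/-- The `r`-covering number of `A ⊆ ℝ^d`: the least number of closed balls of
radius `r` needed to cover `A`. -/
noncomputable def coveringNumber {d : ℕ} (A : Set (Pt d)) (r : ℝ) : ℕ :=
  sInf {k : ℕ | ∃ c : Fin k → Pt d, A ⊆ ⋃ i, Metric.closedBall (c i) r}

/-- A Mauldin–Williams graph in `ℝ^d` over a finite directed multigraph with
vertex type `V` and edge type `E`: each vertex `i` carries a non-empty compact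
set `X i` equal to the closure of its interior, and each edge `e` carries a
contractive similarity `S e` of ratio `r e ∈ (0,1)` mapping `X (term e)` into
`X (init e)`. -/
structure MWGraph (d : ℕ) (V E : Type) [Fintype V] [Fintype E] where
  init : E → V
  term : E → V
  X : V → Set (Pt d)
  S : E → Pt d → Pt d
  r : E → ℝ
  X_nonempty : ∀ i, (X i).Nonempty
  X_compact : ∀ i, IsCompact (X i)
  X_regular : ∀ i, closure (interior (X i)) = X i
  r_pos : ∀ e, 0 < r e
  r_lt_one : ∀ e, r e < 1
  S_maps : ∀ e, Set.MapsTo (S e) (X (term e)) (X (init e))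
  S_sim : ∀ e x y, dist (S e x) (S e y) = r e * dist x y

namespace MWGraph

variable {d : ℕ} {V E : Type} [Fintype V] [Fintype E]

variable (G : MWGraph d V E)

/-- `G.IsPathFrom j γ` holds iff the list of edges `γ` is a directed path
starting at vertex `j`. -/
def IsPathFrom : V → List E → Prop
  | _, [] => True
  | j, e :: es => G.init e = j ∧ IsPathFrom (G.term e) es

/-- Terminal vertex of the path `γ` starting at `j`. -/
def pathTerm : V → List E → V
  | j, [] => j
  | _, e :: es => pathTerm (G.term e) es

/-- `S_γ = S_{e₁} ∘ ⋯ ∘ S_{eₙ}` (with `S_∅ = id`). -/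
def pathMap : List E → Pt d → Pt d
  | [] => id
  | e :: es => G.S e ∘ pathMap es

/-- `r_γ = r_{e₁} ⋯ r_{eₙ}` (with `r_∅ = 1`). -/
def pathRatio (γ : List E) : ℝ := (γ.map G.r).prod

/-- The underlying multigraph is strongly connected: for every ordered pair of
vertices there is a (non-empty) directed path from the first to the second. -/
def StronglyConnected : Prop :=
  ∀ i j : V, ∃ γ : List E, γ ≠ [] ∧ G.IsPathFrom i γ ∧ G.pathTerm i γ = j

/-- `K` is the list of graph-directed self-similar sets of `G`: the unique list
of non-empty compact sets with `K i = ⋃_{e ∈ E_i} S_e (K (term e))`. -/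
def IsAttractor (K : V → Set (Pt d)) : Prop :=
  (∀ i, IsCompact (K i)) ∧ (∀ i, (K i).Nonempty) ∧
    ∀ i, K i = ⋃ e ∈ {e : E | G.init e = i}, G.S e '' K (G.term e)

/-- `C` is an admissible list of condensation sets: compact subsets of the `X i`. -/
def IsCondensation (C : V → Set (Pt d)) : Prop :=
  ∀ i, IsCompact (C i) ∧ C i ⊆ G.X i

/-- `K` is the list of inhomogeneous graph-directed self-similar sets of `(G, C)`:
the unique list of non-empty compact sets with
`K i = ⋃_{e ∈ E_i} S_e (K (term e)) ∪ C i`. -/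
def IsInhomAttractor (C : V → Set (Pt d)) (K : V → Set (Pt d)) : Prop :=
  (∀ i, IsCompact (K i)) ∧ (∀ i, (K i).Nonempty) ∧
    ∀ i, K i = (⋃ e ∈ {e : E | G.init e = i}, G.S e '' K (G.term e)) ∪ C i

/-- `G` satisfies the open set condition with the open sets `U`. -/
def IsOSCWith (U : V → Set (Pt d)) : Prop :=
  (∀ i, (U i).Nonempty) ∧ (∀ i, IsOpen (U i)) ∧ (∀ i, Bornology.IsBounded (U i)) ∧
    (∀ i, U i ⊆ G.X i) ∧
    (∀ i, (⋃ e ∈ {e : E | G.init e = i}, G.S e '' U (G.term e)) ⊆ U i) ∧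
    ∀ e e' : E, G.init e = G.init e' → e ≠ e' →
      Disjoint (G.S e '' U (G.term e)) (G.S e' '' U (G.term e'))

/-- The set `{-log r_γ : γ a directed cycle of G}`. -/
def cycleSet : Set ℝ :=
  {x : ℝ | ∃ (j : V) (γ : List E), γ ≠ [] ∧ G.IsPathFrom j γ ∧ G.pathTerm j γ = j ∧
    x = -Real.log (G.pathRatio γ)}

/-- `G_M`, the smallest closed additive subgroup of `ℝ` containing
`{-log r_γ : γ a directed cycle}`. -/
def GM : Set ℝ := closure ((AddSubgroup.closure (G.cycleSet) : AddSubgroup ℝ) : Set ℝ)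

variable [DecidableEq V]

/-- The matrix `A_G^s` with entries `(A_G^s)_{ij} = Σ_{e ∈ E_{ij}} r_e^s`. -/
def Amatrix (s : ℝ) : Matrix V V ℝ :=
  Matrix.of fun i j => ∑ e : E, if G.init e = i ∧ G.term e = j then G.r e ^ s else 0

end MWGraph

/-- Spectral radius of a real square matrix: the largest modulus of a complex
eigenvalue. -/
noncomputable def matrixSpectralRadius {n : Type} [Fintype n] [DecidableEq n]
    (A : Matrix n n ℝ) : ℝ :=
  sSup {x : ℝ | ∃ μ : ℂ, μ ∈ spectrum ℂ (A.map (fun a : ℝ => (a : ℂ))) ∧ x = ‖μ‖}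

/-- `s` is the (unique) exponent `s ≥ 0` with `ρ(A_G^s) = 1`, i.e. `s = s₀(G)`. -/
def IsS0 {d : ℕ} {V E : Type} [Fintype V] [Fintype E] [DecidableEq V]
    (G : MWGraph d V E) (s : ℝ) : Prop :=
  0 ≤ s ∧ matrixSpectralRadius (G.Amatrix s) = 1

/-!
Covering numbers are subadditive, and additive on compact sets at positive distance once the
radius is small. So it suffices to find, for each vertex `i` and each `η > 0`, a compact set
`F ⊆ U i` such that `K_i^C \ F` has at most `η r ^ (-s)` as its covering number for all small `r`:
the sets `U i` are pairwise disjoint, so the sets `F` of different vertices are apart.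

The limits along one sequence of scales with bounded ratios bound `r ^ s N_r(K_i^C)` above and
below for all small `r`. Decompose `K_i^C` into cylinders of level `n` and condensation pieces of
lower level. The latter are finitely many and negligible. Of the former, only those not contained
in `U i`, the boundary ones, are left out of `F`. Every boundary path can be extended by a path of
bounded length whose cylinder lies in the interior; by the open set condition the extensions of all
boundary paths whose lengths are multiples of a large `L` form an antichain with disjoint cylinders.
Comparing covering numbers, the sum of `r_γ ^ s` over all these paths is finite, hence its part of
level `n` is small for a suitable `n`.
-/

section

theorem surjective_of_dist_eq_mul {F : Type*} [NormedAddCommGroup F] [NormedSpace ℝ F]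
    [StrictConvexSpace ℝ F] [FiniteDimensional ℝ F] {f : F → F} {ρ : ℝ} (hρ : 0 < ρ)
    (hf : ∀ x y, dist (f x) (f y) = ρ * dist x y) : Function.Surjective f := by
  have hiso : Isometry fun x ↦ ρ⁻¹ • f x := Isometry.of_dist_eq fun x y ↦ by
    rw [dist_smul₀, hf, Real.norm_of_nonneg (inv_nonneg.2 hρ.le), inv_mul_cancel_left₀ hρ.ne']
  intro y
  have : Inhabited F := ⟨0⟩
  obtain ⟨x, hx⟩ :=
    (hiso.affineIsometryOfStrictConvexSpace.toAffineIsometryEquiv rfl).surjective (ρ⁻¹ • y)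
  exact ⟨x, smul_right_injective F (inv_ne_zero hρ.ne') hx⟩

theorem tendsto_setLIntegral_Ioi_atTop_zero {f : ℝ → ENNReal} {a : ℝ}
    (hf : ∫⁻ u in Ioi a, f u ≠ ⊤) : Tendsto (fun t ↦ ∫⁻ u in Ioi t, f u) atTop (𝓝 0) := by
  have hμ (t : ℝ) : volume.withDensity f (Ioi t) = ∫⁻ u in Ioi t, f u :=
    withDensity_apply f measurableSet_Ioi
  have hempty : ⋂ t : ℝ, Ioi t = ∅ :=
    eq_empty_of_forall_notMem fun u hu ↦ lt_irrefl u (mem_iInter.1 hu u)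
  have hlim := tendsto_measure_iInter_atTop (μ := volume.withDensity f) (s := Ioi)
    (fun _ ↦ measurableSet_Ioi.nullMeasurableSet) antitone_Ioi ⟨a, by rwa [hμ]⟩
  rw [hempty, measure_empty] at hlim
  exact hlim.congr hμ

theorem exists_pos_forall_le_of_finite {ι : Type*} [Finite ι] {f : ι → ℝ} (hf : ∀ i, 0 < f i) :
    ∃ c, 0 < c ∧ ∀ i, c ≤ f i := by
  have hle : ∀ᶠ c in 𝓝[>] (0 : ℝ), ∀ i, c ≤ f i := eventually_all.2 fun i ↦
    mem_of_superset (Ioo_mem_nhdsGT (hf i)) fun c hc ↦ hc.2.le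
  exact (eventually_mem_nhdsWithin.and hle).exists

theorem tendsto_div_const_nhdsGT_zero {a : ℝ} (ha : 0 < a) :
    Tendsto (fun r : ℝ ↦ r / a) (𝓝[>] 0) (𝓝[>] 0) := by
  refine tendsto_nhdsWithin_iff.2 ⟨?_, eventually_mem_nhdsWithin.mono fun r hr ↦ div_pos hr ha⟩
  exact (Continuous.tendsto' (by fun_prop) 0 0 (zero_div a)).mono_left nhdsWithin_le_nhds

theorem eventually_exists_lt_le {ρ : ℕ → ℝ} (hρ : Tendsto ρ atTop (𝓝[>] 0)) {p : ℕ → Prop}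
    (hp : ∀ᶠ n in atTop, p n) : ∀ᶠ r in 𝓝[>] 0, ∃ n, p n ∧ ρ (n + 1) < r ∧ r ≤ ρ n := by
  obtain ⟨hρ0, hρpos⟩ := tendsto_nhdsWithin_iff.1 hρ
  obtain ⟨N, hN⟩ := eventually_atTop.1 (hp.and hρpos)
  filter_upwards [Ioo_mem_nhdsGT (hN N le_rfl).2] with r hr
  have hex : ∃ k, ρ (N + k) < r := by
    simpa only [add_comm N] using
      ((tendsto_add_atTop_iff_nat N).2 hρ0 |>.eventually_lt_const hr.1).exists
  classical
  obtain ⟨k, hk⟩ : ∃ k, Nat.find hex = k + 1 :=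
    Nat.exists_eq_succ_of_ne_zero fun h0 ↦ (Nat.find_eq_zero hex |>.1 h0).not_gt hr.2
  refine ⟨N + k, (hN _ (Nat.le_add_right N k)).1, ?_, not_lt.1 (Nat.find_min hex (by omega))⟩
  simpa only [hk, add_assoc] using Nat.find_spec hex

variable {X : Type*} [MetricSpace X]

theorem eventually_two_mul_lt_dist {A B : Set X} (hA : IsCompact A) (hB : IsClosed B)
    (hAB : Disjoint A B) : ∀ᶠ r in 𝓝[>] (0 : ℝ), ∀ x ∈ A, ∀ y ∈ B, 2 * r < dist x y := by
  obtain ⟨ε, hε, hdist⟩ := exists_pos_forall_lt_edist hA hB hAB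
  filter_upwards [Ioo_mem_nhdsGT (half_pos (NNReal.coe_pos.2 hε))] with r hr x hx y hy
  have hlt := hdist x hx y hy
  rw [edist_nndist, ENNReal.coe_lt_coe, ← NNReal.coe_lt_coe, coe_nndist] at hlt
  linarith [hr.2]

end

section CoveringNumber

variable {d : ℕ} {ι : Type*} {A B : Set (Pt d)} {r r' : ℝ}

theorem coveringNumber_le_card [Fintype ι] (c : ι → Pt d)
    (hc : A ⊆ ⋃ i, closedBall (c i) r) : coveringNumber A r ≤ Fintype.card ι := by
  refine Nat.sInf_le ⟨c ∘ (Fintype.equivFin ι).symm, ?_⟩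
  rwa [← (Fintype.equivFin ι).symm.surjective.iUnion_comp] at hc

theorem exists_subset_iUnion_closedBall (hA : Bornology.IsBounded A) (hr : 0 < r) :
    ∃ c : Fin (coveringNumber A r) → Pt d, A ⊆ ⋃ i, closedBall (c i) r := by
  refine Nat.sInf_mem (s := {k : ℕ | ∃ c : Fin k → Pt d, A ⊆ ⋃ i, closedBall (c i) r}) ?_
  obtain ⟨t, ht, hAt⟩ :=
    totallyBounded_iff.1 (hA.isCompact_closure.totallyBounded.subset subset_closure) r hr
  have := ht.fintype
  refine ⟨Fintype.card t, fun k ↦ (Fintype.equivFin t).symm k, hAt.trans ?_⟩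
  rw [(Fintype.equivFin t).symm.surjective.iUnion_comp fun y : t ↦ closedBall (y : Pt d) r,
    biUnion_eq_iUnion]
  exact iUnion_mono fun y ↦ ball_subset_closedBall

theorem coveringNumber_mono (hB : Bornology.IsBounded B) (hr : 0 < r) (hAB : A ⊆ B) :
    coveringNumber A r ≤ coveringNumber B r := by
  obtain ⟨c, hc⟩ := exists_subset_iUnion_closedBall hB hr
  simpa using coveringNumber_le_card c (hAB.trans hc)

theorem coveringNumber_anti (hA : Bornology.IsBounded A) (hr : 0 < r) (hrr' : r ≤ r') :
    coveringNumber A r' ≤ coveringNumber A r := by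
  obtain ⟨c, hc⟩ := exists_subset_iUnion_closedBall hA hr
  simpa using coveringNumber_le_card c
    (hc.trans (iUnion_mono fun i ↦ closedBall_subset_closedBall hrr'))

theorem coveringNumber_union_le (hA : Bornology.IsBounded A) (hB : Bornology.IsBounded B)
    (hr : 0 < r) : coveringNumber (A ∪ B) r ≤ coveringNumber A r + coveringNumber B r := by
  obtain ⟨c, hc⟩ := exists_subset_iUnion_closedBall hA hr
  obtain ⟨c', hc'⟩ := exists_subset_iUnion_closedBall hB hr
  simpa using coveringNumber_le_card (Sum.elim c c') (by
    rw [iUnion_sum]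
    exact union_subset_union hc hc')

theorem coveringNumber_biUnion_le (s : Finset ι) {A : ι → Set (Pt d)}
    (hA : ∀ i ∈ s, Bornology.IsBounded (A i)) (hr : 0 < r) :
    coveringNumber (⋃ i ∈ s, A i) r ≤ ∑ i ∈ s, coveringNumber (A i) r := by
  choose c hc using fun i : s ↦ exists_subset_iUnion_closedBall (hA i i.2) hr
  have hcover : ⋃ i ∈ s, A i ⊆
      ⋃ p : Σ i : s, Fin (coveringNumber (A i) r), closedBall (c p.1 p.2) r := by
    rw [iUnion_sigma]
    exact iUnion₂_subset fun i hi ↦ (hc ⟨i, hi⟩).trans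
      (subset_iUnion (fun i : s ↦ ⋃ k, closedBall (c i k) r) ⟨i, hi⟩)
  refine (coveringNumber_le_card _ hcover).trans_eq ?_
  simp only [Fintype.card_sigma, Fintype.card_fin]
  exact Finset.sum_coe_sort s fun i ↦ coveringNumber (A i) r

theorem sum_coveringNumber_le_of_two_mul_lt_dist {s : Finset ι} {A : ι → Set (Pt d)}
    (hB : Bornology.IsBounded B) (hr : 0 < r) (hAB : ∀ a ∈ s, A a ⊆ B)
    (hsep : ∀ a ∈ s, ∀ b ∈ s, a ≠ b → ∀ x ∈ A a, ∀ y ∈ A b, 2 * r < dist x y) :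
    ∑ a ∈ s, coveringNumber (A a) r ≤ coveringNumber B r := by
  classical
  obtain ⟨c, hc⟩ := exists_subset_iUnion_closedBall hB hr
  let J (a : ι) : Finset (Fin (coveringNumber B r)) :=
    {k | (closedBall (c k) r ∩ A a).Nonempty}
  have hcard : ∀ a ∈ s, coveringNumber (A a) r ≤ (J a).card := by
    intro a ha
    have hcover : A a ⊆ ⋃ k : J a, closedBall (c k) r := fun x hx ↦ by
      obtain ⟨k, hk⟩ := mem_iUnion.1 (hc (hAB a ha hx))
      exact mem_iUnion.2 ⟨⟨k, by simpa [J] using ⟨x, hk, hx⟩⟩, hk⟩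
    simpa using coveringNumber_le_card _ hcover
  have hdisj : (s : Set ι).PairwiseDisjoint J := by
    intro a ha b hb hab
    refine Finset.disjoint_left.2 fun k hka hkb ↦ ?_
    obtain ⟨x, hxk, hx⟩ := (Finset.mem_filter.1 hka).2
    obtain ⟨y, hyk, hy⟩ := (Finset.mem_filter.1 hkb).2
    rw [mem_closedBall] at hxk hyk
    linarith [hsep a ha b hb hab x hx y hy, dist_triangle_right x y (c k)]
  calc ∑ a ∈ s, coveringNumber (A a) r ≤ ∑ a ∈ s, (J a).card := Finset.sum_le_sum hcard
    _ = (s.biUnion J).card := (Finset.card_biUnion hdisj).symm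
    _ ≤ coveringNumber B r := by simpa using Finset.card_le_univ (s.biUnion J)

theorem coveringNumber_image {f : Pt d → Pt d} {ρ : ℝ} (hρ : 0 < ρ)
    (hf : ∀ x y, dist (f x) (f y) = ρ * dist x y) (A : Set (Pt d)) (r : ℝ) :
    coveringNumber (f '' A) r = coveringNumber A (r / ρ) := by
  have hpre (y : Pt d) : f ⁻¹' closedBall (f y) r = closedBall y (r / ρ) := by
    ext x
    rw [mem_preimage, mem_closedBall, mem_closedBall, hf, le_div_iff₀' hρ]
  refine congrArg sInf (Set.ext fun k ↦ ?_)
  rw [mem_ofPred_eq, (surjective_of_dist_eq_mul hρ hf).comp_left.exists]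
  simp only [Function.comp_apply, image_subset_iff, preimage_iUnion, hpre, mem_ofPred_eq]

end CoveringNumber

/-- The `r`-covering number of `A` in units of `r ^ (-s)`, whose limits as `r → 0+` play the role
of `s`-dimensional Minkowski contents. -/
def scaledCoveringNumber {d : ℕ} (s : ℝ) (A : Set (Pt d)) (r : ℝ) : ℝ :=
  r ^ s * coveringNumber A r

/-- `A` is Minkowski nondegenerate in dimension `s`, in terms of covering numbers: they are of
exact order `r ^ (-s)` as `r → 0+`. -/
def IsMinkowskiNondegenerate {d : ℕ} (s : ℝ) (A : Set (Pt d)) : Prop :=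
  ∃ m M, 0 < m ∧ ∀ᶠ r in 𝓝[>] (0 : ℝ), scaledCoveringNumber s A r ∈ Icc m M

section ScaledCoveringNumber

variable {d : ℕ} {ι : Type*} {A B : Set (Pt d)} {s r r' c : ℝ}

theorem scaledCoveringNumber_nonneg (hr : 0 < r) : 0 ≤ scaledCoveringNumber s A r := by
  unfold scaledCoveringNumber
  positivity

theorem scaledCoveringNumber_exp_neg (t : ℝ) :
    scaledCoveringNumber s A (Real.exp (-t)) =
      Real.exp (-s * t) * coveringNumber A (Real.exp (-t)) := by
  rw [scaledCoveringNumber, ← Real.exp_mul, neg_mul_comm, mul_comm t]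

theorem scaledCoveringNumber_mono (hB : Bornology.IsBounded B) (hr : 0 < r) (hAB : A ⊆ B) :
    scaledCoveringNumber s A r ≤ scaledCoveringNumber s B r := by
  unfold scaledCoveringNumber
  gcongr
  exact coveringNumber_mono hB hr hAB

theorem scaledCoveringNumber_union_le (hA : Bornology.IsBounded A) (hB : Bornology.IsBounded B)
    (hr : 0 < r) : scaledCoveringNumber s (A ∪ B) r ≤
      scaledCoveringNumber s A r + scaledCoveringNumber s B r := by
  unfold scaledCoveringNumber
  rw [← mul_add]
  gcongr
  exact_mod_cast coveringNumber_union_le hA hB hr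

theorem scaledCoveringNumber_biUnion_le (P : Finset ι) {A : ι → Set (Pt d)}
    (hA : ∀ i ∈ P, Bornology.IsBounded (A i)) (hr : 0 < r) :
    scaledCoveringNumber s (⋃ i ∈ P, A i) r ≤ ∑ i ∈ P, scaledCoveringNumber s (A i) r := by
  unfold scaledCoveringNumber
  rw [← Finset.mul_sum]
  gcongr
  exact_mod_cast coveringNumber_biUnion_le P hA hr

theorem scaledCoveringNumber_image {f : Pt d → Pt d} {ρ : ℝ} (hρ : 0 < ρ)
    (hf : ∀ x y, dist (f x) (f y) = ρ * dist x y) (A : Set (Pt d)) (hr : 0 < r) :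
    scaledCoveringNumber s (f '' A) r = ρ ^ s * scaledCoveringNumber s A (r / ρ) := by
  rw [scaledCoveringNumber, scaledCoveringNumber, coveringNumber_image hρ hf, ← mul_assoc,
    ← Real.mul_rpow hρ.le (div_pos hr hρ).le, mul_div_cancel₀ _ hρ.ne']

theorem scaledCoveringNumber_le_rpow_mul (hA : Bornology.IsBounded A) (hs : 0 ≤ s) (hr : 0 < r)
    (hc : 0 ≤ c) (hrr' : r ≤ r') (hr' : r' ≤ c * r) :
    scaledCoveringNumber s A r' ≤ c ^ s * scaledCoveringNumber s A r := by
  unfold scaledCoveringNumber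
  rw [← mul_assoc, ← Real.mul_rpow hc hr.le]
  gcongr
  · exact hr.le.trans hrr'
  · exact _root_.coveringNumber_anti hA hr hrr'

theorem eventually_sum_scaledCoveringNumber_le (P : Finset ι) {A F : ι → Set (Pt d)} (s : ℝ)
    (hB : Bornology.IsBounded B) (hF : ∀ a ∈ P, IsCompact (F a))
    (hdisj : (P : Set ι).PairwiseDisjoint F) (hAF : ∀ a ∈ P, A a ⊆ F a)
    (hAB : ∀ a ∈ P, A a ⊆ B) :
    ∀ᶠ r in 𝓝[>] (0 : ℝ),
      ∑ a ∈ P, scaledCoveringNumber s (A a) r ≤ scaledCoveringNumber s B r := by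
  have hsep : ∀ᶠ r in 𝓝[>] (0 : ℝ), ∀ a ∈ P, ∀ b ∈ P, a ≠ b →
      ∀ x ∈ F a, ∀ y ∈ F b, 2 * r < dist x y :=
    (eventually_all_finset P).2 fun a ha ↦ (eventually_all_finset P).2 fun b hb ↦
      eventually_imp_distrib_left.2 fun hab ↦
        eventually_two_mul_lt_dist (hF a ha) (hF b hb).isClosed (hdisj ha hb hab)
  filter_upwards [hsep, eventually_mem_nhdsWithin] with r hsep hr
  have hr : 0 < r := hr
  unfold scaledCoveringNumber
  rw [← Finset.mul_sum]
  gcongr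
  exact_mod_cast sum_coveringNumber_le_of_two_mul_lt_dist hB hr hAB
    fun a ha b hb hab x hx y hy ↦ hsep a ha b hb hab x (hAF a ha hx) y (hAF b hb hy)

theorem tendsto_sum_scaledCoveringNumber_sub_iUnion [Fintype ι] {A U : ι → Set (Pt d)}
    (hA : ∀ i, Bornology.IsBounded (A i)) (hU : Pairwise (Function.onFun Disjoint U))
    (hAU : ∀ i, ∀ η > 0, ∃ F ⊆ U i, IsCompact F ∧
      ∀ᶠ r in 𝓝[>] (0 : ℝ), scaledCoveringNumber s (A i \ F) r ≤ η) :
    Tendsto (fun r ↦ ∑ i, scaledCoveringNumber s (A i) r - scaledCoveringNumber s (⋃ i, A i) r)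
      (𝓝[>] 0) (𝓝 0) := by
  rw [Metric.tendsto_nhds]
  intro ε hε
  obtain ⟨η, hη, hηε⟩ := exists_pos_mul_lt hε (Fintype.card ι)
  choose F hFU hF hrest using fun i ↦ hAU i η hη
  have hinner := eventually_sum_scaledCoveringNumber_le Finset.univ (A := fun i ↦ A i ∩ F i) s
    (Bornology.isBounded_iUnion.2 hA) (fun i _ ↦ hF i)
    (fun i _ j _ hij ↦ (hU hij).mono (hFU i) (hFU j)) (fun i _ ↦ inter_subset_right)
    (fun i _ ↦ inter_subset_left.trans (subset_iUnion A i))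
  filter_upwards [hinner, eventually_all.2 hrest, eventually_mem_nhdsWithin] with r hinner hrest hr
  have hupper : scaledCoveringNumber s (⋃ i, A i) r ≤ ∑ i, scaledCoveringNumber s (A i) r := by
    simpa using scaledCoveringNumber_biUnion_le Finset.univ (fun i _ ↦ hA i) hr
  have hsplit (i : ι) : scaledCoveringNumber s (A i) r ≤
      scaledCoveringNumber s (A i ∩ F i) r + η := by
    conv_lhs => rw [← inter_union_sdiff (A i) (F i)]
    exact (scaledCoveringNumber_union_le ((hA i).subset inter_subset_left)
      ((hA i).subset sdiff_subset) hr).trans (by gcongr; exact hrest i)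
  have hlower : ∑ i, scaledCoveringNumber s (A i) r ≤
      scaledCoveringNumber s (⋃ i, A i) r + Fintype.card ι * η := by
    refine (Finset.sum_le_sum fun i _ ↦ hsplit i).trans ?_
    rw [Finset.sum_add_distrib, Finset.sum_const, Finset.card_univ, nsmul_eq_mul]
    gcongr
  rw [Real.dist_eq, sub_zero, abs_of_nonneg (sub_nonneg.2 hupper)]
  linarith

theorem isMinkowskiNondegenerate_of_tendsto (hA : Bornology.IsBounded A)
    (hs : 0 ≤ s) {ρ : ℕ → ℝ} (hρ : Tendsto ρ atTop (𝓝[>] 0)) (hc : 0 < c)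
    (hρc : ∀ n, ρ n ≤ c * ρ (n + 1)) {a : ℝ} (ha : 0 < a)
    (hlim : Tendsto (fun n ↦ scaledCoveringNumber s A (ρ n)) atTop (𝓝 a)) :
    IsMinkowskiNondegenerate s A := by
  have hcs : 0 < c ^ s := Real.rpow_pos_of_pos hc s
  have hlow := hlim.eventually_const_lt (half_lt_self ha)
  have hup := (tendsto_add_atTop_nat 1).eventually
    (hlim.eventually_lt_const (lt_two_mul_self ha))
  have hpos := (tendsto_add_atTop_nat 1).eventually (tendsto_nhdsWithin_iff.1 hρ).2
  refine ⟨a / 2 / c ^ s, c ^ s * (2 * a), by positivity, ?_⟩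
  filter_upwards [eventually_exists_lt_le hρ (hlow.and (hup.and hpos)), eventually_mem_nhdsWithin]
    with r ⟨n, ⟨hlow, hup, hpos⟩, hnr, hrn⟩ hr
  have hr : 0 < r := hr
  constructor
  · rw [div_le_iff₀' hcs]
    exact hlow.le.trans (scaledCoveringNumber_le_rpow_mul hA hs hr hc.le hrn
      ((hρc n).trans (by gcongr)))
  · exact (scaledCoveringNumber_le_rpow_mul hA hs hpos hc.le hnr.le (hrn.trans (hρc n))).trans
      (by gcongr)

theorem exists_uniform_scaledCoveringNumber_bounds [Finite ι]
    {A : ι → Set (Pt d)} (hA : ∀ i, IsMinkowskiNondegenerate s (A i)) :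
    ∃ m M, 0 < m ∧ 0 < M ∧ ∀ i, ∀ᶠ r in 𝓝[>] (0 : ℝ), scaledCoveringNumber s (A i) r ∈ Icc m M := by
  choose m M hm hbounds using hA
  obtain ⟨m₀, hm₀, hle⟩ := exists_pos_forall_le_of_finite hm
  obtain ⟨M₀, hM₀⟩ := Finite.exists_le M
  exact ⟨m₀, max M₀ 1, hm₀, lt_max_of_lt_right one_pos, fun i ↦ (hbounds i).mono fun r hr ↦
    ⟨(hle i).trans hr.1, hr.2.trans (le_max_of_le_left (hM₀ i))⟩⟩

theorem tendsto_scaledCoveringNumber_zero_of_lintegral_lt_top (hA : Bornology.IsBounded A)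
    (hs : 0 ≤ s) (hint : ∫⁻ t in Ioi (0 : ℝ),
      ENNReal.ofReal (Real.exp (-s * t) * (coveringNumber A (Real.exp (-t)) : ℝ)) < ⊤) :
    Tendsto (scaledCoveringNumber s A) (𝓝[>] 0) (𝓝 0) := by
  simp_rw [← scaledCoveringNumber_exp_neg] at hint
  set φ : ℝ → ENNReal := fun t ↦ ENNReal.ofReal (scaledCoveringNumber s A (Real.exp (-t)))
  have hlocal {t u : ℝ} (hu : u ∈ Ioc t (t + 1)) :
      φ t ≤ ENNReal.ofReal (Real.exp 1 ^ s) * φ u := by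
    rw [← ENNReal.ofReal_mul (by positivity)]
    refine ENNReal.ofReal_le_ofReal (scaledCoveringNumber_le_rpow_mul hA hs (Real.exp_pos _)
      (Real.exp_pos 1).le ?_ ?_)
    · exact Real.exp_le_exp.2 (neg_le_neg hu.1.le)
    · rw [← Real.exp_add, Real.exp_le_exp]
      linarith [hu.2]
  have htail (t : ℝ) : φ t ≤ ENNReal.ofReal (Real.exp 1 ^ s) * ∫⁻ u in Ioi t, φ u :=
    calc φ t = ∫⁻ _ in Ioc t (t + 1), φ t := by simp
      _ ≤ ∫⁻ u in Ioc t (t + 1), ENNReal.ofReal (Real.exp 1 ^ s) * φ u :=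
        setLIntegral_mono' measurableSet_Ioc fun u hu ↦ hlocal hu
      _ ≤ ∫⁻ u in Ioi t, ENNReal.ofReal (Real.exp 1 ^ s) * φ u :=
        lintegral_mono_set Ioc_subset_Ioi_self
      _ = _ := lintegral_const_mul' _ _ ENNReal.ofReal_ne_top
  have hφ : Tendsto φ atTop (𝓝 0) := by
    refine tendsto_of_tendsto_of_tendsto_of_le_of_le tendsto_const_nhds ?_ (fun _ ↦ zero_le) htail
    simpa using ENNReal.Tendsto.const_mul (tendsto_setLIntegral_Ioi_atTop_zero hint.ne)
      (.inr ENNReal.ofReal_ne_top)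
  have hlog : Tendsto (fun r ↦ (φ (-Real.log r)).toReal) (𝓝[>] 0) (𝓝 0) :=
    (ENNReal.tendsto_toReal ENNReal.zero_ne_top).comp
      (hφ.comp (tendsto_neg_atBot_atTop.comp Real.tendsto_log_nhdsGT_zero))
  refine hlog.congr' (eventually_mem_nhdsWithin.mono fun r hr ↦ ?_)
  rw [ENNReal.toReal_ofReal (scaledCoveringNumber_nonneg (Real.exp_pos _)), neg_neg,
    Real.exp_log hr]

end ScaledCoveringNumber

theorem eq_or_append_prefix_of_append_prefix_append {α : Type*} {L : ℕ} {l₁ l₂ t₁ t₂ : List α}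
    (hl₁ : L ∣ l₁.length) (hl₂ : L ∣ l₂.length) (ht₁ : t₁.length < L) (ht₂ : t₂.length < L)
    (h : l₁ ++ t₁ <+: l₂ ++ t₂) : l₁ = l₂ ∨ l₁ ++ t₁ <+: l₂ := by
  rcases le_or_gt (l₁ ++ t₁).length l₂.length with hle | hlt
  · exact .inr (List.prefix_of_prefix_length_le h (List.prefix_append _ _) hle)
  · left
    have hlen := h.length_le
    rw [List.length_append] at hlt
    rw [List.length_append, List.length_append] at hlen
    have heq : l₁.length = l₂.length := by
      obtain ⟨k₁, hk₁⟩ := hl₁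
      obtain ⟨k₂, hk₂⟩ := hl₂
      have h₁ : k₂ < k₁ + 1 := lt_of_mul_lt_mul_left (a := L) (by linarith) L.zero_le
      have h₂ : k₁ < k₂ + 1 := lt_of_mul_lt_mul_left (a := L) (by linarith) L.zero_le
      rw [hk₁, hk₂, le_antisymm (Nat.lt_succ_iff.1 h₂) (Nat.lt_succ_iff.1 h₁)]
    exact (List.prefix_of_prefix_length_le ((List.prefix_append _ _).trans h)
      (List.prefix_append _ _) heq.le).eq_of_length heq

namespace MWGraph

variable {d : ℕ} {V E : Type} [Fintype V] [Fintype E] (G : MWGraph d V E)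

section Paths

theorem pathRatio_cons (e : E) (γ : List E) :
    G.pathRatio (e :: γ) = G.r e * G.pathRatio γ := by
  rw [pathRatio, List.map_cons, List.prod_cons, pathRatio]

theorem pathRatio_append (γ γ' : List E) :
    G.pathRatio (γ ++ γ') = G.pathRatio γ * G.pathRatio γ' := by
  rw [pathRatio, List.map_append, List.prod_append, pathRatio, pathRatio]

theorem pathRatio_pos (γ : List E) : 0 < G.pathRatio γ :=
  List.prod_pos (by simpa using fun e _ ↦ G.r_pos e)

theorem rpow_pathRatio_pos (γ : List E) (s : ℝ) : 0 < G.pathRatio γ ^ s :=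
  Real.rpow_pos_of_pos (G.pathRatio_pos γ) s

theorem rpow_pathRatio_append (γ γ' : List E) (s : ℝ) :
    G.pathRatio (γ ++ γ') ^ s = G.pathRatio γ ^ s * G.pathRatio γ' ^ s := by
  rw [pathRatio_append, Real.mul_rpow (G.pathRatio_pos γ).le (G.pathRatio_pos γ').le]

theorem exists_pathRatio_lt {ε : ℝ} (hε : 0 < ε) :
    ∃ n : ℕ, ∀ γ : List E, γ.length = n → G.pathRatio γ < ε := by
  have hle : ∀ᶠ ρ in 𝓝[<] (1 : ℝ), ∀ e, G.r e ≤ ρ := eventually_all.2 fun e ↦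
    mem_of_superset (Ioo_mem_nhdsLT (G.r_lt_one e)) fun ρ hρ ↦ hρ.1.le
  obtain ⟨ρ, hρ, hρ0, hρ1⟩ := (hle.and (Ioo_mem_nhdsLT one_pos)).exists
  obtain ⟨n, hn⟩ := exists_pow_lt_of_lt_one hε hρ1
  have hpow (γ : List E) : G.pathRatio γ ≤ ρ ^ γ.length := by
    induction γ with
    | nil => simp [pathRatio]
    | cons e γ ih =>
      rw [pathRatio_cons, List.length_cons, pow_succ']
      exact mul_le_mul (hρ e) ih (G.pathRatio_pos γ).le hρ0.le
  exact ⟨n, fun γ hγ ↦ (hpow γ).trans_lt (hγ ▸ hn)⟩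

theorem pathTerm_append (i : V) (γ γ' : List E) :
    G.pathTerm i (γ ++ γ') = G.pathTerm (G.pathTerm i γ) γ' := by
  induction γ generalizing i with
  | nil => rfl
  | cons _ _ ih => exact ih _

theorem isPathFrom_append {i : V} {γ γ' : List E} :
    G.IsPathFrom i (γ ++ γ') ↔ G.IsPathFrom i γ ∧ G.IsPathFrom (G.pathTerm i γ) γ' := by
  induction γ generalizing i with
  | nil => simp [IsPathFrom, pathTerm]
  | cons e γ ih => simp [IsPathFrom, pathTerm, ih, and_assoc]

theorem pathMap_append (γ γ' : List E) :
    G.pathMap (γ ++ γ') = G.pathMap γ ∘ G.pathMap γ' := by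
  induction γ with
  | nil => rfl
  | cons e γ ih => rw [List.cons_append, pathMap, pathMap, ih, Function.comp_assoc]

theorem dist_pathMap (γ : List E) (x y : Pt d) :
    dist (G.pathMap γ x) (G.pathMap γ y) = G.pathRatio γ * dist x y := by
  induction γ with
  | nil => simp [pathMap, pathRatio]
  | cons e γ ih =>
    rw [pathMap, Function.comp_apply, Function.comp_apply, G.S_sim, ih, pathRatio_cons, mul_assoc]

theorem continuous_pathMap (γ : List E) : Continuous (G.pathMap γ) :=
  (LipschitzWith.of_dist_le_mul (K := ⟨G.pathRatio γ, (G.pathRatio_pos γ).le⟩)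
    fun x y ↦ (G.dist_pathMap γ x y).le).continuous

theorem S_injective (e : E) : Function.Injective (G.S e) := fun x y hxy ↦ by
  have hdist := G.S_sim e x y
  rw [hxy, dist_self, zero_eq_mul] at hdist
  exact dist_eq_zero.1 (hdist.resolve_left (G.r_pos e).ne')

end Paths

/-- The cylinder `S_γ (Y_{t(γ)})` of the path `γ` from `i`, relative to a family `Y` of sets
indexed by the vertices. -/
def cylinder (Y : V → Set (Pt d)) (i : V) (γ : List E) : Set (Pt d) :=
  G.pathMap γ '' Y (G.pathTerm i γ)

section Cylinder

variable {Y : V → Set (Pt d)} {i : V} {γ γ' : List E}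

theorem cylinder_nil : G.cylinder Y i [] = Y i :=
  image_id _

theorem cylinder_cons (e : E) :
    G.cylinder Y i (e :: γ) = G.S e '' G.cylinder Y (G.term e) γ :=
  image_comp _ _ _

theorem cylinder_append :
    G.cylinder Y i (γ ++ γ') = G.pathMap γ '' G.cylinder Y (G.pathTerm i γ) γ' := by
  rw [cylinder, cylinder, pathMap_append, pathTerm_append, image_comp]

theorem cylinder_subset (hY : ∀ e, MapsTo (G.S e) (Y (G.term e)) (Y (G.init e)))
    (hγ : G.IsPathFrom i γ) : G.cylinder Y i γ ⊆ Y i := by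
  induction γ generalizing i with
  | nil => exact G.cylinder_nil.subset
  | cons e γ ih =>
    obtain ⟨rfl, hγ⟩ := hγ
    rw [cylinder_cons]
    exact (image_mono (ih hγ)).trans (hY e).image_subset

theorem cylinder_append_subset (hY : ∀ e, MapsTo (G.S e) (Y (G.term e)) (Y (G.init e)))
    (hγ : G.IsPathFrom i (γ ++ γ')) : G.cylinder Y i (γ ++ γ') ⊆ G.cylinder Y i γ := by
  rw [cylinder_append]
  exact image_mono (G.cylinder_subset hY (G.isPathFrom_append.1 hγ).2)

theorem isCompact_cylinder (hY : ∀ j, IsCompact (Y j)) (i : V) (γ : List E) :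
    IsCompact (G.cylinder Y i γ) :=
  (hY _).image (G.continuous_pathMap γ)

theorem isBounded_cylinder (hY : ∀ j, Bornology.IsBounded (Y j)) (i : V) (γ : List E) :
    Bornology.IsBounded (G.cylinder Y i γ) :=
  (G.isCompact_cylinder (fun j ↦ (hY j).isCompact_closure) i γ).isBounded.subset
    (image_mono subset_closure)

theorem exists_dist_lt_of_mem_cylinder (hY : ∀ j, Bornology.IsBounded (Y j)) {ε : ℝ}
    (hε : 0 < ε) : ∃ n : ℕ, ∀ i γ, γ.length = n →
      ∀ x ∈ G.cylinder Y i γ, ∀ y ∈ G.cylinder Y i γ, dist x y < ε := by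
  obtain ⟨D, hD0, hD⟩ := (Bornology.isBounded_iUnion.2 hY).subset_ball_lt 0 0
  obtain ⟨n, hn⟩ := G.exists_pathRatio_lt (ε := ε / (2 * D)) (by positivity)
  refine ⟨n, fun i γ hγ ↦ ?_⟩
  rintro _ ⟨x, hx, rfl⟩ _ ⟨y, hy, rfl⟩
  have hx := mem_ball.1 (hD (mem_iUnion_of_mem _ hx))
  have hy := mem_ball.1 (hD (mem_iUnion_of_mem _ hy))
  have hxy : dist x y ≤ 2 * D := by linarith [dist_triangle_right x y 0]
  calc dist (G.pathMap γ x) (G.pathMap γ y) = G.pathRatio γ * dist x y := G.dist_pathMap γ x y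
    _ ≤ G.pathRatio γ * (2 * D) := mul_le_mul_of_nonneg_left hxy (G.pathRatio_pos γ).le
    _ < ε := (lt_div_iff₀ (by positivity)).1 (hn γ hγ)

theorem scaledCoveringNumber_cylinder {s r : ℝ} (hr : 0 < r) :
    scaledCoveringNumber s (G.cylinder Y i γ) r =
      G.pathRatio γ ^ s * scaledCoveringNumber s (Y (G.pathTerm i γ)) (r / G.pathRatio γ) :=
  scaledCoveringNumber_image (G.pathRatio_pos γ) (G.dist_pathMap γ) _ hr

theorem eventually_scaledCoveringNumber_biUnion_cylinder_le
    (hY : ∀ j, Bornology.IsBounded (Y j)) {s M : ℝ}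
    (hM : ∀ j, ∀ᶠ r in 𝓝[>] (0 : ℝ), scaledCoveringNumber s (Y j) r ≤ M)
    (P : Finset (List E)) (i : V) :
    ∀ᶠ r in 𝓝[>] (0 : ℝ), scaledCoveringNumber s (⋃ γ ∈ P, G.cylinder Y i γ) r ≤
      (∑ γ ∈ P, G.pathRatio γ ^ s) * M := by
  have hscale : ∀ᶠ r in 𝓝[>] (0 : ℝ), ∀ γ ∈ P,
      scaledCoveringNumber s (Y (G.pathTerm i γ)) (r / G.pathRatio γ) ≤ M :=
    (eventually_all_finset P).2 fun γ _ ↦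
      (tendsto_div_const_nhdsGT_zero (G.pathRatio_pos γ)).eventually (hM _)
  filter_upwards [hscale, eventually_mem_nhdsWithin] with r hscale hr
  refine (scaledCoveringNumber_biUnion_le P (fun γ _ ↦ G.isBounded_cylinder hY i γ) hr).trans ?_
  rw [Finset.sum_mul]
  refine Finset.sum_le_sum fun γ hγ ↦ ?_
  rw [G.scaledCoveringNumber_cylinder hr]
  exact mul_le_mul_of_nonneg_left (hscale γ hγ) (G.rpow_pathRatio_pos γ s).le

end Cylinder

variable {G} {C K KC U : V → Set (Pt d)} {s : ℝ}

section Attractor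

theorem IsAttractor.isInhomAttractor (hK : G.IsAttractor K) :
    G.IsInhomAttractor (fun _ ↦ ∅) K :=
  ⟨hK.1, hK.2.1, fun i ↦ (hK.2.2 i).trans (union_empty _).symm⟩

theorem IsInhomAttractor.mapsTo (hKC : G.IsInhomAttractor C KC) (e : E) :
    MapsTo (G.S e) (KC (G.term e)) (KC (G.init e)) := fun _ hx ↦ by
  rw [hKC.2.2]
  exact .inl (mem_iUnion₂.2 ⟨e, rfl, mem_image_of_mem _ hx⟩)

theorem IsInhomAttractor.condensation_subset (hKC : G.IsInhomAttractor C KC) (i : V) :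
    C i ⊆ KC i := by
  rw [hKC.2.2 i]
  exact subset_union_right

theorem IsInhomAttractor.exists_mem_cylinder (hKC : G.IsInhomAttractor C KC) (n : ℕ) {i : V}
    {x : Pt d} (hx : x ∈ KC i) :
    (∃ γ : List E, γ.length = n ∧ G.IsPathFrom i γ ∧ x ∈ G.cylinder KC i γ) ∨
      ∃ γ : List E, γ.length < n ∧ G.IsPathFrom i γ ∧ x ∈ G.cylinder C i γ := by
  induction n generalizing i x with
  | zero => exact .inl ⟨[], rfl, trivial, G.cylinder_nil.symm ▸ hx⟩
  | succ n ih =>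
    rw [hKC.2.2 i] at hx
    rcases hx with hx | hx
    · obtain ⟨e, rfl, y, hy, rfl⟩ := mem_iUnion₂.1 hx
      rcases ih hy with ⟨γ, hn, hγ, hyγ⟩ | ⟨γ, hn, hγ, hyγ⟩
      · exact .inl ⟨e :: γ, by simp [hn], ⟨rfl, hγ⟩,
          G.cylinder_cons e ▸ mem_image_of_mem _ hyγ⟩
      · exact .inr ⟨e :: γ, by simpa using hn, ⟨rfl, hγ⟩,
          G.cylinder_cons e ▸ mem_image_of_mem _ hyγ⟩
    · exact .inr ⟨[], n.succ_pos, trivial, G.cylinder_nil.symm ▸ hx⟩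

theorem IsAttractor.exists_cylinder_subset (hK : G.IsAttractor K) {Y : V → Set (Pt d)}
    (hY : ∀ j, Bornology.IsBounded (Y j)) {i : V} {W : Set (Pt d)} (hW : IsOpen W)
    (hWK : (W ∩ K i).Nonempty) : ∃ γ, G.IsPathFrom i γ ∧ G.cylinder Y i γ ⊆ W := by
  obtain ⟨x, hxW, hxK⟩ := hWK
  obtain ⟨ε, hε, hball⟩ := Metric.isOpen_iff.1 hW x hxW
  obtain ⟨n, hn⟩ := G.exists_dist_lt_of_mem_cylinder (Y := fun j ↦ Y j ∪ K j)
    (fun j ↦ (hY j).union (hK.1 j).isBounded) hε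
  rcases hK.isInhomAttractor.exists_mem_cylinder n hxK with
    ⟨γ, hγn, hγ, hxγ⟩ | ⟨γ, -, -, hxγ⟩
  · exact ⟨γ, hγ, fun y hy ↦ hball (hn i γ hγn y (image_mono subset_union_left hy) x
      (image_mono subset_union_right hxγ))⟩
  · simp [cylinder] at hxγ

end Attractor

section OpenSetCondition

theorem IsOSCWith.mapsTo (hU : G.IsOSCWith U) (e : E) :
    MapsTo (G.S e) (U (G.term e)) (U (G.init e)) := fun _ hx ↦
  hU.2.2.2.2.1 _ (mem_iUnion₂.2 ⟨e, rfl, mem_image_of_mem _ hx⟩)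

theorem IsOSCWith.pairwise_disjoint (hU : G.IsOSCWith U)
    (hX : Pairwise fun i j ↦ Disjoint (interior (G.X i)) (interior (G.X j))) :
    Pairwise (Function.onFun Disjoint U) := fun i j hij ↦
  (hX hij).mono (interior_maximal (hU.2.2.2.1 i) (hU.2.1 i))
    (interior_maximal (hU.2.2.2.1 j) (hU.2.1 j))

theorem IsOSCWith.disjoint_cylinder (hU : G.IsOSCWith U) {i : V} {γ γ' : List E}
    (hγ : G.IsPathFrom i γ) (hγ' : G.IsPathFrom i γ') (h : ¬ γ <+: γ') (h' : ¬ γ' <+: γ) :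
    Disjoint (G.cylinder U i γ) (G.cylinder U i γ') := by
  induction γ generalizing i γ' with
  | nil => exact (h List.nil_prefix).elim
  | cons e γ ih =>
    cases γ' with
    | nil => exact (h' List.nil_prefix).elim
    | cons e' γ' =>
      obtain ⟨rfl, hγ⟩ := hγ
      obtain ⟨hinit, hγ'⟩ := hγ'
      rw [cylinder_cons, cylinder_cons]
      rcases eq_or_ne e e' with rfl | hee'
      · rw [disjoint_image_iff (G.S_injective e)]
        exact ih hγ hγ' (by simpa using h) (by simpa using h')
      · exact (hU.2.2.2.2.2 e e' hinit.symm hee').mono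
          (image_mono (G.cylinder_subset hU.mapsTo hγ))
          (image_mono (G.cylinder_subset hU.mapsTo hγ'))

end OpenSetCondition

section BoundaryLayer

variable {i : V} {g : V → List E}

theorem exists_sum_rpow_pathRatio_le_of_isAntichain (hKC : G.IsInhomAttractor C KC)
    (hU : G.IsOSCWith U) (hg : ∀ j, G.IsPathFrom j (g j))
    (hgU : ∀ j, G.cylinder KC j (g j) ⊆ U j)
    (hnd : ∀ j, IsMinkowskiNondegenerate s (KC j)) (i : V) :
    ∃ c, ∀ P : Finset (List E), (∀ γ ∈ P, G.IsPathFrom i γ) →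
      IsAntichain (· <+: ·) (P : Set (List E)) → ∑ γ ∈ P, G.pathRatio γ ^ s ≤ c := by
  obtain ⟨m, M, hm, -, hbounds⟩ := exists_uniform_scaledCoveringNumber_bounds hnd
  obtain ⟨κ, hκ, hκg⟩ := exists_pos_forall_le_of_finite fun j ↦ G.rpow_pathRatio_pos (g j) s
  refine ⟨M / (κ * m), fun P hP hanti ↦ ?_⟩
  let A (γ : List E) : Set (Pt d) := G.cylinder KC i (γ ++ g (G.pathTerm i γ))
  have hAU (γ : List E) : A γ ⊆ G.cylinder U i γ :=
    G.cylinder_append.trans_subset (image_mono (hgU _))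
  have hdisj : (P : Set (List E)).PairwiseDisjoint A := fun γ hγ γ' hγ' hne ↦
    (hU.disjoint_cylinder (hP γ hγ) (hP γ' hγ') (hanti hγ hγ' hne)
      (hanti hγ' hγ hne.symm)).mono (hAU γ) (hAU γ')
  have hsum := eventually_sum_scaledCoveringNumber_le P s (hKC.1 i).isBounded
    (fun γ _ ↦ G.isCompact_cylinder hKC.1 i _) hdisj (fun γ _ ↦ Subset.rfl)
    (fun γ hγ ↦ G.cylinder_subset hKC.mapsTo (G.isPathFrom_append.2 ⟨hP γ hγ, hg _⟩))
  have hlow : ∀ᶠ r in 𝓝[>] (0 : ℝ), ∀ γ ∈ P,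
      G.pathRatio γ ^ s * (κ * m) ≤ scaledCoveringNumber s (A γ) r := by
    refine (eventually_all_finset P).2 fun γ _ ↦ ?_
    set δ := g (G.pathTerm i γ)
    filter_upwards [(tendsto_div_const_nhdsGT_zero (G.pathRatio_pos (γ ++ δ))).eventually
      (hbounds (G.pathTerm i (γ ++ δ))), eventually_mem_nhdsWithin] with r hr hr0
    rw [G.scaledCoveringNumber_cylinder hr0, rpow_pathRatio_append, mul_assoc]
    have hγ0 := G.rpow_pathRatio_pos γ s
    have hδ0 := G.rpow_pathRatio_pos δ s
    gcongr
    · exact hκg _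
    · exact hr.1
  obtain ⟨r, hsum, hlow, hr⟩ := (hsum.and (hlow.and (hbounds i))).exists
  rw [le_div_iff₀ (mul_pos hκ hm), Finset.sum_mul]
  exact (Finset.sum_le_sum hlow).trans (hsum.trans hr.2)

variable (G) in
/-- The paths from `i` whose cylinder relative to `Y` leaves `W`; for `W = U i` they index the
pieces of the attractor which may come near the other vertices. -/
def boundaryPaths (Y : V → Set (Pt d)) (W : Set (Pt d)) (i : V) : Set (List E) :=
  {γ | G.IsPathFrom i γ ∧ ¬ G.cylinder Y i γ ⊆ W}

theorem not_append_prefix_of_mem_boundaryPaths (hKC : G.IsInhomAttractor C KC)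
    (hU : G.IsOSCWith U) (hgU : ∀ j, G.cylinder KC j (g j) ⊆ U j) {γ γ' : List E}
    (hγ : γ ∈ G.boundaryPaths KC (U i) i) (hγ' : γ' ∈ G.boundaryPaths KC (U i) i) :
    ¬ γ ++ g (G.pathTerm i γ) <+: γ' := by
  rintro ⟨t, rfl⟩
  refine hγ'.2 ((G.cylinder_append_subset hKC.mapsTo hγ'.1).trans ?_)
  rw [cylinder_append]
  exact (image_mono (hgU _)).trans (G.cylinder_subset hU.mapsTo hγ.1)

theorem exists_sum_boundaryPaths_le (hKC : G.IsInhomAttractor C KC) (hU : G.IsOSCWith U)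
    (hg : ∀ j, G.IsPathFrom j (g j)) (hgU : ∀ j, G.cylinder KC j (g j) ⊆ U j)
    (hnd : ∀ j, IsMinkowskiNondegenerate s (KC j)) (i : V) :
    ∃ L > 0, ∃ c, ∀ P : Finset (List E),
      (∀ γ ∈ P, γ ∈ G.boundaryPaths KC (U i) i ∧ L ∣ γ.length) →
        ∑ γ ∈ P, G.pathRatio γ ^ s ≤ c := by
  classical
  obtain ⟨L, hL⟩ := Finite.exists_le fun j ↦ (g j).length + 1
  obtain ⟨κ, hκ, hκg⟩ := exists_pos_forall_le_of_finite fun j ↦ G.rpow_pathRatio_pos (g j) s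
  obtain ⟨c, hc⟩ := exists_sum_rpow_pathRatio_le_of_isAntichain hKC hU hg hgU hnd i
  refine ⟨L, (Nat.succ_pos _).trans_le (hL i), c / κ, fun P hP ↦ ?_⟩
  let w (γ : List E) : List E := γ ++ g (G.pathTerm i γ)
  have hprefix : ∀ γ ∈ P, ∀ γ' ∈ P, w γ <+: w γ' → γ = γ' := fun γ hγ γ' hγ' h ↦
    (eq_or_append_prefix_of_append_prefix_append (hP γ hγ).2 (hP γ' hγ').2 (hL _) (hL _)
      h).resolve_right
      (not_append_prefix_of_mem_boundaryPaths hKC hU hgU (hP γ hγ).1 (hP γ' hγ').1)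
  have hinj : InjOn w P := fun γ hγ γ' hγ' h ↦ hprefix γ hγ γ' hγ' (h ▸ List.prefix_rfl)
  have hpath : ∀ γ ∈ P.image w, G.IsPathFrom i γ :=
    Finset.forall_mem_image.2 fun γ hγ ↦ G.isPathFrom_append.2 ⟨(hP γ hγ).1.1, hg _⟩
  have hanti : IsAntichain (· <+: ·) (P.image w : Set (List E)) := by
    rw [Finset.coe_image]
    rintro _ ⟨γ, hγ, rfl⟩ _ ⟨γ', hγ', rfl⟩ hne h
    exact hne (congrArg w (hprefix γ hγ γ' hγ' h))
  rw [le_div_iff₀ hκ, Finset.sum_mul]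
  refine le_trans (Finset.sum_le_sum fun γ _ ↦ ?_)
    ((Finset.sum_image hinj).symm.trans_le (hc _ hpath hanti))
  rw [rpow_pathRatio_append]
  exact mul_le_mul_of_nonneg_left (hκg _) (G.rpow_pathRatio_pos γ s).le

theorem exists_length_sum_boundaryPaths_lt (hKC : G.IsInhomAttractor C KC) (hU : G.IsOSCWith U)
    (hg : ∀ j, G.IsPathFrom j (g j)) (hgU : ∀ j, G.cylinder KC j (g j) ⊆ U j)
    (hnd : ∀ j, IsMinkowskiNondegenerate s (KC j)) (i : V) {η : ℝ} (hη : 0 < η) :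
    ∃ n, ∀ P : Finset (List E), (∀ γ ∈ P, γ ∈ G.boundaryPaths KC (U i) i ∧ γ.length = n) →
      ∑ γ ∈ P, G.pathRatio γ ^ s < η := by
  classical
  obtain ⟨L, hL, c, hc⟩ := exists_sum_boundaryPaths_le hKC hU hg hgU hnd i
  let B : Set (List E) := {γ | γ ∈ G.boundaryPaths KC (U i) i ∧ L ∣ γ.length}
  have hsummable : Summable (B.indicator fun γ ↦ G.pathRatio γ ^ s) := by
    refine summable_of_sum_le (indicator_nonneg fun γ _ ↦ (G.rpow_pathRatio_pos γ s).le) (c := c)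
      fun P ↦ ?_
    rw [Finset.sum_indicator_eq_sum_filter]
    exact hc _ fun γ hγ ↦ (Finset.mem_filter.1 hγ).2
  obtain ⟨T, hT⟩ := summable_iff_vanishing_norm.1 hsummable η hη
  refine ⟨L * (T.sup List.length + 1), fun P hP ↦ ?_⟩
  have hPT : Disjoint P T := Finset.disjoint_left.2 fun γ hγ hγT ↦ by
    have hle : γ.length ≤ T.sup List.length := Finset.le_sup hγT
    have hlt := Nat.le_mul_of_pos_left (T.sup List.length + 1) hL
    exact absurd (hP γ hγ).2 (by omega)
  calc ∑ γ ∈ P, G.pathRatio γ ^ s = ∑ γ ∈ P, B.indicator (fun γ ↦ G.pathRatio γ ^ s) γ :=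
        Finset.sum_congr rfl fun γ hγ ↦ by
          rw [indicator_of_mem (show γ ∈ B from ⟨(hP γ hγ).1, (hP γ hγ).2 ▸ dvd_mul_right L _⟩)]
    _ < η := (le_abs_self _).trans_lt (hT P hPT)

theorem exists_isCompact_subset_eventually_scaledCoveringNumber_sdiff_le
    (hKC : G.IsInhomAttractor C KC) (hU : G.IsOSCWith U)
    (hg : ∀ j, G.IsPathFrom j (g j)) (hgU : ∀ j, G.cylinder KC j (g j) ⊆ U j)
    (hnd : ∀ j, IsMinkowskiNondegenerate s (KC j))
    (hC0 : ∀ j, Tendsto (scaledCoveringNumber s (C j)) (𝓝[>] 0) (𝓝 0)) (i : V) {η : ℝ}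
    (hη : 0 < η) : ∃ F ⊆ U i, IsCompact F ∧
      ∀ᶠ r in 𝓝[>] (0 : ℝ), scaledCoveringNumber s (KC i \ F) r ≤ η := by
  classical
  obtain ⟨_, M, _, hM, hbounds⟩ := exists_uniform_scaledCoveringNumber_bounds hnd
  obtain ⟨n, hn⟩ :=
    exists_length_sum_boundaryPaths_lt hKC hU hg hgU hnd i (div_pos (half_pos hη) hM)
  let long : Finset (List E) := (List.finite_length_eq E n).toFinset
  let short : Finset (List E) := (List.finite_length_lt E n).toFinset
  let inner : Finset (List E) := {γ ∈ long | G.cylinder KC i γ ⊆ U i}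
  let bdry : Finset (List E) := {γ ∈ long | γ ∈ G.boundaryPaths KC (U i) i}
  have hbdry : (∑ γ ∈ bdry, G.pathRatio γ ^ s) * M < η / 2 :=
    (lt_div_iff₀ hM).1 (hn bdry (by simp +contextual [bdry, long]))
  obtain ⟨ζ, hζ, hshort⟩ := exists_pos_mul_lt (half_pos hη) (∑ γ ∈ short, G.pathRatio γ ^ s)
  have hKCb (j : V) : Bornology.IsBounded (KC j) := (hKC.1 j).isBounded
  have hCb (j : V) : Bornology.IsBounded (C j) := (hKCb j).subset (hKC.condensation_subset j)
  refine ⟨⋃ γ ∈ inner, G.cylinder KC i γ, iUnion₂_subset fun γ hγ ↦ (Finset.mem_filter.1 hγ).2,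
    inner.isCompact_biUnion fun γ _ ↦ G.isCompact_cylinder hKC.1 i γ, ?_⟩
  have hcover : KC i \ ⋃ γ ∈ inner, G.cylinder KC i γ ⊆
      (⋃ γ ∈ bdry, G.cylinder KC i γ) ∪ ⋃ γ ∈ short, G.cylinder C i γ := by
    rintro x ⟨hx, hxinner⟩
    rcases hKC.exists_mem_cylinder n hx with ⟨γ, hγn, hγ, hxγ⟩ | ⟨γ, hγn, -, hxγ⟩
    · have hlong : γ ∈ long := by simpa [long] using hγn
      refine .inl (mem_biUnion (Finset.mem_filter.2 ⟨hlong, hγ, fun hsub ↦ ?_⟩) hxγ)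
      exact hxinner (mem_biUnion (Finset.mem_filter.2 ⟨hlong, hsub⟩) hxγ)
    · exact .inr (mem_biUnion (by simpa [short] using hγn) hxγ)
  filter_upwards [eventually_mem_nhdsWithin,
    G.eventually_scaledCoveringNumber_biUnion_cylinder_le hKCb
      (fun j ↦ (hbounds j).mono fun r hr ↦ hr.2) bdry i,
    G.eventually_scaledCoveringNumber_biUnion_cylinder_le hCb
      (fun j ↦ (hC0 j).eventually_le_const hζ) short i] with r hr hrbdry hrshort
  have hbd := (Bornology.isBounded_biUnion_finset bdry).2 fun γ _ ↦ G.isBounded_cylinder hKCb i γ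
  have hbs := (Bornology.isBounded_biUnion_finset short).2 fun γ _ ↦ G.isBounded_cylinder hCb i γ
  linarith [scaledCoveringNumber_mono (s := s) (hbd.union hbs) hr hcover,
    scaledCoveringNumber_union_le (s := s) hbd hbs hr]

end BoundaryLayer

theorem IsInhomAttractor.tendsto_sum_scaledCoveringNumber_sub_iUnion
    (hKC : G.IsInhomAttractor C KC) (hK : G.IsAttractor K) (hU : G.IsOSCWith U)
    (hUK : ∀ i, (U i ∩ K i).Nonempty)
    (hX : Pairwise fun i j ↦ Disjoint (interior (G.X i)) (interior (G.X j)))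
    (hnd : ∀ i, IsMinkowskiNondegenerate s (KC i))
    (hC0 : ∀ i, Tendsto (scaledCoveringNumber s (C i)) (𝓝[>] 0) (𝓝 0)) :
    Tendsto (fun r ↦ ∑ i, scaledCoveringNumber s (KC i) r -
      scaledCoveringNumber s (⋃ i, KC i) r) (𝓝[>] 0) (𝓝 0) := by
  have hKCb (j : V) : Bornology.IsBounded (KC j) := (hKC.1 j).isBounded
  choose g hg hgU using fun i ↦ hK.exists_cylinder_subset hKCb (hU.2.1 i) (hUK i)
  exact _root_.tendsto_sum_scaledCoveringNumber_sub_iUnion hKCb (hU.pairwise_disjoint hX)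
    fun i η hη ↦ exists_isCompact_subset_eventually_scaledCoveringNumber_sdiff_le hKC hU hg hgU
      hnd hC0 i hη

end MWGraph

theorem tendsto_scaledCoveringNumber_exp_neg_of_tendsto_div {d : ℕ} {A : Set (Pt d)} {s a : ℝ}
    {α : Type*} {l : Filter α} {t : α → ℝ} (ha : a ≠ 0)
    (hlim : Tendsto (fun x ↦ (coveringNumber A (Real.exp (-t x)) : ℝ) / (a * Real.exp (s * t x)))
      l (𝓝 1)) :
    Tendsto (fun x ↦ scaledCoveringNumber s A (Real.exp (-t x))) l (𝓝 a) := by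
  have hmul := hlim.const_mul a
  rw [mul_one] at hmul
  refine hmul.congr fun x ↦ ?_
  rw [← mul_div_assoc, mul_div_mul_left _ _ ha, scaledCoveringNumber_exp_neg, neg_mul,
    Real.exp_neg (s * t x), div_eq_inv_mul]

theorem stmt3_general {d : ℕ} {V E : Type} [Fintype V] [Fintype E] (G : MWGraph d V E)
    {C K KC U : V → Set (Pt d)} (hK : G.IsAttractor K) (hKC : G.IsInhomAttractor C KC)
    (hU : G.IsOSCWith U) (hUK : ∀ i, (U i ∩ K i).Nonempty)
    (hX : Pairwise fun i j : V ↦ Disjoint (interior (G.X i)) (interior (G.X j)))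
    {s : ℝ} (hs : 0 ≤ s)
    (hC0 : ∀ i, Tendsto (scaledCoveringNumber s (C i)) (𝓝[>] 0) (𝓝 0))
    {t : ℕ → ℝ} {τ : ℝ} (ht : Tendsto t atTop atTop) (hgap : ∀ n, t (n + 1) ≤ t n + τ)
    {a : V → ℝ} (ha : ∀ i, 0 < a i)
    (hlim : ∀ i, Tendsto (fun n ↦ (coveringNumber (KC i) (Real.exp (-t n)) : ℝ) /
      (a i * Real.exp (s * t n))) atTop (𝓝 1)) :
    Tendsto (fun n ↦ Real.exp (-s * t n) * (coveringNumber (⋃ i, KC i) (Real.exp (-t n)) : ℝ))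
      atTop (𝓝 (∑ i, a i)) := by
  have hscale : Tendsto (fun n ↦ Real.exp (-t n)) atTop (𝓝[>] 0) :=
    Real.tendsto_exp_atBot_nhdsGT.comp (tendsto_neg_atTop_atBot.comp ht)
  have hratio (n : ℕ) : Real.exp (-t n) ≤ Real.exp τ * Real.exp (-t (n + 1)) := by
    rw [← Real.exp_add, Real.exp_le_exp]
    linarith [hgap n]
  have hlim' (i : V) := tendsto_scaledCoveringNumber_exp_neg_of_tendsto_div (ha i).ne' (hlim i)
  have hnd (i : V) : IsMinkowskiNondegenerate s (KC i) :=
    isMinkowskiNondegenerate_of_tendsto (hKC.1 i).isBounded hs hscale (Real.exp_pos τ) hratio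
      (ha i) (hlim' i)
  have hdiff :=
    (hKC.tendsto_sum_scaledCoveringNumber_sub_iUnion hK hU hUK hX hnd hC0).comp hscale
  have hsum := (tendsto_finsetSum Finset.univ fun i _ ↦ hlim' i).sub hdiff
  rw [sub_zero] at hsum
  exact hsum.congr fun n ↦ by
    rw [Function.comp_apply, sub_sub_cancel, scaledCoveringNumber_exp_neg]

theorem stmt3 {d : ℕ} {V E : Type} [Fintype V] [Fintype E] [DecidableEq V]
    (G : MWGraph d V E) (hSC : G.StronglyConnected)
    (C K KC U : V → Set (Pt d))
    (hC : G.IsCondensation C) (hK : G.IsAttractor K) (hKC : G.IsInhomAttractor C KC)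
    (hU : G.IsOSCWith U) (hUK : ∀ i, (U i ∩ K i).Nonempty)
    (hCU : ∀ i, C i ⊆ closure (U i))
    (s0 : ℝ) (hs0 : IsS0 G s0)
    (hint : ∀ i : V, ∫⁻ t in Set.Ioi (0 : ℝ),
      ENNReal.ofReal (Real.exp (-s0 * t) * (coveringNumber (C i) (Real.exp (-t)) : ℝ)) < ⊤)
    (hX : Pairwise fun i j : V => Disjoint (interior (G.X i)) (interior (G.X j)))
    (τ : ℝ) (hτ : 0 < τ) (hGM : G.GM = {x : ℝ | ∃ n : ℤ, x = n * τ})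
    (δ : ℝ) (hδ : 0 < δ) (h : V → ℝ → ℝ) (hge : ∀ i x, δ ≤ h i x)
    (hper : ∀ i x, h i (x + τ) = h i x)
    (hlim : ∀ i : V, ∀ y ∈ Set.Ico (0 : ℝ) τ,
      Tendsto (fun n : ℕ => (coveringNumber (KC i) (Real.exp (-(n * τ + y))) : ℝ) /
        (h i y * Real.exp (s0 * (n * τ + y)))) atTop (𝓝 1)) :
    ∀ y ∈ Set.Ico (0 : ℝ) τ,
      Tendsto (fun n : ℕ => Real.exp (-s0 * (n * τ + y)) *
        (coveringNumber (⋃ i : V, KC i) (Real.exp (-(n * τ + y))) : ℝ))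
        atTop (𝓝 (∑ i : V, h i y)) := by
  intro y hy
  have ht : Tendsto (fun n : ℕ ↦ n * τ + y) atTop atTop :=
    tendsto_atTop_add_const_right _ y (tendsto_natCast_atTop_atTop.atTop_mul_const hτ)
  exact stmt3_general (τ := τ) G hK hKC hU hUK hX hs0.1
    (fun i ↦ tendsto_scaledCoveringNumber_zero_of_lintegral_lt_top (hC i).1.isBounded hs0.1
      (hint i)) ht (fun n ↦ by push_cast; linarith) (fun i ↦ hδ.trans_le (hge i y))
    fun i ↦ hlim i y hy
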